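/- Let m, n be positive integers and p_1, ..., p_m ∈ [1, ∞]. There exists a constant C > 0 depending only on m (not on n or on p_1, ..., p_m) such that there is a choice of signs ε_{j_1,...,j_m} ∈ {−1, 1} for which the m-linear form A : ℓ_{p_1}^n × ⋯ × ℓ_{p_m}^n → 𝕂 defined by A(z^{(1)}, ..., z^{(m)}) = Σ_{j_1,...,j_m=1}^n ε_{j_1,...,j_m} z_{j_1}^{(1)} ⋯ z_{j_m}^{(m)} satisfies ‖A‖ ≤ C · n^{1/ρ + Σ_{k=1}^m max{1/2 − 1/p_k, 0}}, where ρ := min_{1≤k≤m} max{2, p_k*} and p_k* is the conjugate exponent of p_k (with the convention 1/∞ = 0). -/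

import Mathlib

open scoped BigOperators ENNReal

noncomputable section

/-- The `ℓ_p` norm on `𝕂^n`, for `p ∈ [1, ∞]` (sup norm when `p = ∞`). -/
def lpNorm {𝕂 : Type*} [RCLike 𝕂] (p : ℝ≥0∞) {n : ℕ} (x : Fin n → 𝕂) : ℝ :=
  if p = ∞ then ⨆ j, ‖x j‖ else (∑ j, ‖x j‖ ^ p.toReal) ^ (1 / p.toReal)

/-- The operator norm of an `m`-linear form `A : ℓ_{p 1}^{n 1} × ⋯ × ℓ_{p m}^{n m} → 𝕂`,
i.e. the supremum of `‖A x‖` over all `x` with `‖x k‖_{p k} ≤ 1` for every `k`. -/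
def opNorm {𝕂 : Type*} [RCLike 𝕂] {m : ℕ} {n : Fin m → ℕ} (p : Fin m → ℝ≥0∞)
    (A : MultilinearMap 𝕂 (fun k => Fin (n k) → 𝕂) 𝕂) : ℝ :=
  sSup {t | ∃ x : ∀ k, Fin (n k) → 𝕂, (∀ k, lpNorm (p k) (x k) ≤ 1) ∧ t = ‖A x‖}

/-- A multilinear form is unimodular if all its coefficients `A (e_{j 1}, …, e_{j m})`
have modulus 1. -/
def Unimodular {𝕂 : Type*} [RCLike 𝕂] {m : ℕ} {n : Fin m → ℕ}
    (A : MultilinearMap 𝕂 (fun k => Fin (n k) → 𝕂) 𝕂) : Prop :=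
  ∀ j : ∀ k, Fin (n k), ‖A (fun k => Pi.single (j k) 1)‖ = 1

/-- The `m`-linear form `z ↦ ∑_j c j • z^{(1)}_{j 1} ⋯ z^{(m)}_{j m}` determined by the
coefficients `c`. -/
def coeffForm {𝕂 : Type*} [RCLike 𝕂] {m : ℕ} {n : Fin m → ℕ} (c : (∀ k, Fin (n k)) → 𝕂) :
    MultilinearMap 𝕂 (fun k => Fin (n k) → 𝕂) 𝕂 :=
  ∑ j : ∀ k, Fin (n k), (MultilinearMap.mkPiRing 𝕂 (Fin m) (c j)).compLinearMap
    fun k => LinearMap.proj (j k)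

/-- The conjugate exponent `p*` of `p ∈ [1,∞]`, defined by `1/p + 1/p* = 1`. -/
def conjExp (p : ℝ≥0∞) : ℝ≥0∞ := (1 - 1/p)⁻¹

/-!
On `ℓ₂` spaces, `1/2`-nets of the unit balls reduce the norm of a random sign form to the maximum
of exponentially (in `n`) many sums `∑ ε_j a_j` with `∑ |a_j|² ≤ 1`. Their sub-Gaussian tails give
signs with norm `O(√n)`. On `ℓ₁` spaces the norm is trivially at most `1`.

The same signs work for every `p`. If some `p_k ≥ 2`, the comparison
`‖x‖₂ ≤ n ^ max (1/2 - 1/p, 0) ‖x‖_p` reduces the claim to the `ℓ₂` bound. If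
`q = max_k p_k ≤ 2`, complex interpolation between `ℓ₁` and `ℓ₂` gives the norm `O(n ^ (1 - 1/q))`
on `ℓ_q`, hence on the smaller balls of `ℓ_{p_k}`. Since `𝕂` embeds isometrically into `ℂ` and the
signs are integers, it suffices to treat complex scalars.
-/

open Module
open scoped NNReal

section RandomSigns

variable {J τ : Type*} [Fintype J]

lemma sum_exp_sum_signs [DecidableEq J] (a : J → ℝ) :
    ∑ ε : J → ℤˣ, Real.exp (∑ j, (ε j : ℤ) * a j) =
      2 ^ Fintype.card J * ∏ j, Real.cosh (a j) := by
  have sum_exp_sign (x : ℝ) : ∑ u : ℤˣ, Real.exp ((u : ℤ) * x) = 2 * Real.cosh x := by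
    rw [UnitsInt.univ, Finset.sum_pair (by decide), Real.cosh_eq]
    simp [mul_div_cancel₀]
  simp_rw [Real.exp_sum]
  rw [← Fintype.prod_sum fun j (u : ℤˣ) => Real.exp ((u : ℤ) * a j)]
  simp only [sum_exp_sign, Finset.prod_mul_distrib, Finset.prod_const, Finset.card_univ]

lemma sum_exp_abs_sum_signs_le [DecidableEq J] (a : J → ℝ) :
    ∑ ε : J → ℤˣ, Real.exp |∑ j, (ε j : ℤ) * a j| ≤
      2 ^ Fintype.card J * (2 * Real.exp ((∑ j, a j ^ 2) / 2)) := by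
  have exp_abs_le (x : ℝ) : Real.exp |x| ≤ Real.exp x + Real.exp (-x) := by
    rcases abs_choice x with h | h <;> rw [h] <;> linarith [Real.exp_pos x, Real.exp_pos (-x)]
  have prod_cosh_le : ∏ j, Real.cosh (a j) ≤ Real.exp ((∑ j, a j ^ 2) / 2) := by
    rw [Finset.sum_div, Real.exp_sum]
    exact Finset.prod_le_prod (fun j _ => (Real.cosh_pos _).le)
      fun j _ => Real.cosh_le_exp_half_sq (a j)
  calc ∑ ε : J → ℤˣ, Real.exp |∑ j, (ε j : ℤ) * a j|
      ≤ ∑ ε : J → ℤˣ, (Real.exp (∑ j, (ε j : ℤ) * a j) + Real.exp (∑ j, (ε j : ℤ) * -a j)) := by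
        refine Finset.sum_le_sum fun ε _ => (exp_abs_le _).trans_eq ?_
        simp only [mul_neg, Finset.sum_neg_distrib]
    _ = 2 ^ Fintype.card J * (2 * ∏ j, Real.cosh (a j)) := by
        rw [Finset.sum_add_distrib, sum_exp_sum_signs, sum_exp_sum_signs fun j => -a j]
        simp only [Real.cosh_neg]
        ring
    _ ≤ _ := by gcongr

lemma exists_signs_abs_sum_le (T : Finset τ) (a : τ → J → ℝ)
    (ha : ∀ t ∈ T, ∑ j, a t j ^ 2 ≤ 1) :
    ∃ ε : J → ℤˣ, ∀ t ∈ T, |∑ j, (ε j : ℤ) * a t j| ≤ √(2 * Real.log (2 * T.card)) := by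
  classical
  rcases T.eq_empty_or_nonempty with rfl | hT
  · exact ⟨1, by simp⟩
  have one_le_card : (1 : ℝ) ≤ T.card := by exact_mod_cast hT.card_pos
  set L := Real.log (2 * T.card)
  have exp_L : Real.exp L = 2 * T.card := Real.exp_log (by positivity)
  have L_pos : 0 < L := Real.log_pos (by linarith)
  set l := √(2 * L)
  have l_pos : 0 < l := by positivity
  have l_sq : l ^ 2 = 2 * L := Real.sq_sqrt (by positivity)
  have sum_le (t : τ) (ht : t ∈ T) : ∑ ε : J → ℤˣ, Real.exp |∑ j, (ε j : ℤ) * (l * a t j)| ≤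
      2 ^ Fintype.card J * (2 * Real.exp L) := by
    refine (sum_exp_abs_sum_signs_le _).trans ?_
    gcongr
    simp only [mul_pow, ← Finset.mul_sum, l_sq]
    nlinarith [ha t ht]
  obtain ⟨ε, -, hε⟩ : ∃ ε ∈ (Finset.univ : Finset (J → ℤˣ)),
      ∑ t ∈ T, Real.exp |∑ j, (ε j : ℤ) * (l * a t j)| ≤ T.card * (2 * Real.exp L) := by
    refine Finset.exists_le_of_sum_le Finset.univ_nonempty ?_
    rw [Finset.sum_comm]
    refine (Finset.sum_le_sum sum_le).trans_eq ?_
    simp only [Finset.sum_const, nsmul_eq_mul, Finset.card_univ, Fintype.card_fun,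
      Fintype.card_units_int, Nat.cast_pow, Nat.cast_ofNat]
    ring
  refine ⟨ε, fun t ht => le_of_mul_le_mul_left ?_ l_pos⟩
  rw [← sq, l_sq, ← Real.exp_le_exp, two_mul L, Real.exp_add]
  calc Real.exp (l * |∑ j, (ε j : ℤ) * a t j|)
      = Real.exp |∑ j, (ε j : ℤ) * (l * a t j)| := by
        simp only [mul_left_comm _ l, ← Finset.mul_sum, abs_mul, abs_of_pos l_pos]
    _ ≤ ∑ t ∈ T, Real.exp |∑ j, (ε j : ℤ) * (l * a t j)| :=
        Finset.single_le_sum (f := fun t => Real.exp |∑ j, (ε j : ℤ) * (l * a t j)|)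
          (fun _ _ => (Real.exp_pos _).le) ht
    _ ≤ T.card * (2 * Real.exp L) := hε
    _ = Real.exp L * Real.exp L := by rw [exp_L]; ring

lemma exists_signs_norm_sum_le (T : Finset τ) (a : τ → J → ℂ)
    (ha : ∀ t ∈ T, ∑ j, ‖a t j‖ ^ 2 ≤ 1) :
    ∃ ε : J → ℤˣ, ∀ t ∈ T, ‖∑ j, (ε j : ℤ) * a t j‖ ≤ 2 * √(Real.log (4 * T.card)) := by
  have re_le (z : ℂ) : z.re ^ 2 ≤ ‖z‖ ^ 2 := sq_le_sq.2 (by simpa using Complex.abs_re_le_norm z)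
  have im_le (z : ℂ) : z.im ^ 2 ≤ ‖z‖ ^ 2 := sq_le_sq.2 (by simpa using Complex.abs_im_le_norm z)
  obtain ⟨ε, hε⟩ := exists_signs_abs_sum_le (T.disjSum T)
    (Sum.elim (fun t j => (a t j).re) fun t j => (a t j).im) (by
      rintro (t | t) ht
      · exact (Finset.sum_le_sum fun j _ => re_le _).trans (ha t (by simpa using ht))
      · exact (Finset.sum_le_sum fun j _ => im_le _).trans (ha t (by simpa using ht)))
  refine ⟨ε, fun t ht => (Complex.norm_le_sqrt_two_mul_max _).trans ?_⟩
  have re_bound := hε (.inl t) (Finset.inl_mem_disjSum.2 ht)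
  have im_bound := hε (.inr t) (Finset.inr_mem_disjSum.2 ht)
  have card_eq : (2 : ℝ) * (T.disjSum T).card = 4 * T.card := by
    rw [Finset.card_disjSum]; push_cast; ring
  simp only [Sum.elim_inl, Sum.elim_inr, card_eq] at re_bound im_bound
  calc _ ≤ √2 * √(2 * Real.log (4 * T.card)) := by
        gcongr
        refine max_le ?_ ?_
        · simpa using re_bound
        · simpa using im_bound
    _ = 2 * √(Real.log (4 * T.card)) := by
        rw [Real.sqrt_mul zero_le_two, ← mul_assoc, Real.mul_self_sqrt zero_le_two]

end RandomSigns

section Nets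

variable {E : Type*} [NormedAddCommGroup E] [NormedSpace ℝ E] [FiniteDimensional ℝ E]

lemma card_le_of_isSeparated_half (s : Finset E) (hs : (s : Set E) ⊆ Metric.closedBall 0 1)
    (hsep : Metric.IsSeparated (1 / 2 : ℝ≥0) (s : Set E)) : s.card ≤ 5 ^ finrank ℝ E := by
  classical
  have double_injective : Function.Injective fun x : E => (2 : ℝ) • x :=
    smul_right_injective E two_ne_zero
  rw [← Finset.card_image_of_injective s double_injective]
  refine Besicovitch.card_le_of_separated _ ?_ ?_
  · simp only [Finset.forall_mem_image]
    intro x hx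
    have norm_le_one : ‖x‖ ≤ 1 := by simpa using hs hx
    rw [norm_smul, Real.norm_ofNat]
    linarith
  · simp only [Finset.forall_mem_image]
    intro x hx y hy hxy
    have half_lt_dist : ((1 / 2 : ℝ≥0) : ℝ≥0∞) < edist x y := hsep hx hy (ne_of_apply_ne _ hxy)
    rw [edist_nndist, ENNReal.coe_lt_coe, ← NNReal.coe_lt_coe, coe_nndist, dist_eq_norm]
      at half_lt_dist
    push_cast at half_lt_dist
    rw [← smul_sub, norm_smul, Real.norm_ofNat]
    linarith

lemma packingNumber_half_closedBall_le :
    Metric.packingNumber (1 / 2) (Metric.closedBall (0 : E) 1) ≤ (5 ^ finrank ℝ E : ℕ) := by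
  refine iSup_le fun C => iSup_le fun hC => iSup_le fun hsep => ?_
  by_contra! hlt
  obtain ⟨t, htC, ht⟩ := Set.exists_subset_encard_eq (Order.add_one_le_of_lt hlt)
  have t_finite : t.Finite := Set.finite_of_encard_eq_coe (k := 5 ^ finrank ℝ E + 1) ht
  lift t to Finset E using t_finite
  have card_t_le := card_le_of_isSeparated_half t (htC.trans hC) (hsep.subset htC)
  rw [Set.encard_coe_eq_coe_finsetCard] at ht
  norm_cast at ht
  omega

variable (E) in
lemma exists_finset_isCover_half_closedBall :
    ∃ N : Finset E, (N : Set E) ⊆ Metric.closedBall 0 1 ∧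
      Metric.IsCover (1 / 2) (Metric.closedBall 0 1) (N : Set E) ∧ N.card ≤ 5 ^ finrank ℝ E := by
  have covering_le : Metric.coveringNumber (1 / 2) (Metric.closedBall (0 : E) 1) ≤ _ :=
    (Metric.coveringNumber_le_packingNumber _ _).trans packingNumber_half_closedBall_le
  obtain ⟨N, hN, N_finite, hcover, hcard⟩ := Metric.exists_set_encard_eq_coveringNumber
    (covering_le.trans_lt (ENat.natCast_lt_top _)).ne
  lift N to Finset E using N_finite
  refine ⟨N, hN, hcover, ?_⟩
  rw [← hcard, Set.encard_coe_eq_coe_finsetCard] at covering_le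
  exact_mod_cast covering_le

end Nets

section NormOnNet

variable {𝕜 : Type*} [RCLike 𝕜] {G : Type*} [SeminormedAddCommGroup G] [NormedSpace 𝕜 G]

lemma norm_le_two_mul_of_isCover_half {E : Type*} [SeminormedAddCommGroup E] [NormedSpace 𝕜 E]
    (φ : E →L[𝕜] G) {N : Set E} (hN : Metric.IsCover (1 / 2) (Metric.closedBall 0 1) N)
    {K : ℝ} (hK : 0 ≤ K) (hφ : ∀ y ∈ N, ‖φ y‖ ≤ K) : ‖φ‖ ≤ 2 * K := by
  suffices ‖φ‖ ≤ K + ‖φ‖ * (1 / 2) by linarith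
  refine φ.opNorm_le_of_unit_norm (by positivity) fun x hx => ?_
  obtain ⟨y, hy, hxy⟩ : ∃ y ∈ N, dist x y ≤ 1 / 2 := by
    simpa using Metric.isCover_iff_subset_iUnion_closedBall.1 hN
      (mem_closedBall_zero_iff.2 hx.le)
  rw [dist_eq_norm] at hxy
  calc ‖φ x‖ = ‖φ y + φ (x - y)‖ := by rw [← map_add, add_sub_cancel]
    _ ≤ ‖φ y‖ + ‖φ (x - y)‖ := norm_add_le _ _
    _ ≤ K + ‖φ‖ * (1 / 2) := add_le_add (hφ y hy) (φ.le_opNorm_of_le hxy)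

variable {ι : Type*} [Fintype ι] {E : ι → Type*} [∀ i, NormedAddCommGroup (E i)]
  [∀ i, NormedSpace 𝕜 (E i)] [∀ i, FiniteDimensional 𝕜 (E i)]

lemma norm_multilinear_le_of_isCover_half (A : MultilinearMap 𝕜 E G) {N : ∀ i, Set (E i)}
    (hN : ∀ i, Metric.IsCover (1 / 2) (Metric.closedBall 0 1) (N i)) {K : ℝ} (hK : 0 ≤ K)
    (hA : ∀ y, (∀ i, y i ∈ N i) → ‖A y‖ ≤ K) (x : ∀ i, E i) :
    ‖A x‖ ≤ 2 ^ Fintype.card ι * K * ∏ i, ‖x i‖ := by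
  classical
  suffices ∀ s : Finset ι, ∀ x : ∀ i, E i, (∀ i ∉ s, x i ∈ N i) →
      ‖A x‖ ≤ 2 ^ s.card * K * ∏ i ∈ s, ‖x i‖ from this Finset.univ x (by simp)
  intro s
  induction s using Finset.induction_on with
  | empty => simpa using hA
  | insert a s has ih =>
    intro x hx
    set φ := (A.toLinearMap x a).toContinuousLinearMap
    have φ_apply (y : E a) : φ y = A (Function.update x a y) := rfl
    have norm_φ_le : ‖φ‖ ≤ 2 * (2 ^ s.card * K * ∏ i ∈ s, ‖x i‖) := by
      refine norm_le_two_mul_of_isCover_half φ (hN a) (by positivity) fun y hy => ?_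
      have update_mem (i) (hi : i ∉ s) : Function.update x a y i ∈ N i := by
        rcases eq_or_ne i a with rfl | hia
        · rwa [Function.update_self]
        · rw [Function.update_of_ne hia]
          exact hx i (by simp [hia, hi])
      refine (ih _ update_mem).trans_eq ?_
      congr 1
      exact Finset.prod_congr rfl fun i hi => by rw [Function.update_of_ne (by grind)]
    calc ‖A x‖ = ‖φ (x a)‖ := by rw [φ_apply, Function.update_eq_self]
      _ ≤ ‖φ‖ * ‖x a‖ := φ.le_opNorm _
      _ ≤ 2 * (2 ^ s.card * K * ∏ i ∈ s, ‖x i‖) * ‖x a‖ := by gcongr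
      _ = 2 ^ (insert a s).card * K * ∏ i ∈ insert a s, ‖x i‖ := by
        rw [Finset.card_insert_of_notMem has, Finset.prod_insert has]
        ring

end NormOnNet

section LpNorm

variable {𝕂 : Type*} [RCLike 𝕂] {n : ℕ} {p q : ℝ≥0∞} (x : Fin n → 𝕂)

lemma lpNorm_of_ne_top (hp : p ≠ ∞) :
    lpNorm p x = (∑ j, ‖x j‖ ^ p.toReal) ^ (1 / p.toReal) :=
  if_neg hp

lemma lpNorm_nonneg : 0 ≤ lpNorm p x := by
  unfold lpNorm
  split_ifs
  · exact Real.iSup_nonneg fun j => norm_nonneg _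
  · positivity

lemma lpNorm_eq_norm_toLp (hp : p ≠ 0) : lpNorm p x = ‖WithLp.toLp p x‖ := by
  rcases eq_or_ne p ∞ with rfl | hp'
  · rw [PiLp.norm_eq_ciSup, lpNorm, if_pos rfl]
  · rw [PiLp.norm_eq_sum (ENNReal.toReal_pos hp hp'), lpNorm_of_ne_top x hp']

lemma lpNorm_one : lpNorm 1 x = ∑ j, ‖x j‖ := by
  simp [lpNorm]

lemma norm_apply_le_lpNorm (hp : p ≠ 0) (j : Fin n) : ‖x j‖ ≤ lpNorm p x := by
  rw [lpNorm]
  split_ifs with hp'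
  · exact le_ciSup (f := fun j => ‖x j‖) (Set.finite_range _).bddAbove j
  · have toReal_pos := ENNReal.toReal_pos hp hp'
    rw [one_div, Real.le_rpow_inv_iff_of_pos (norm_nonneg _) (by positivity) toReal_pos]
    exact Finset.single_le_sum (f := fun j => ‖x j‖ ^ p.toReal) (fun _ _ => by positivity)
      (Finset.mem_univ j)

lemma lpNorm_rpow_toReal (hp : 0 < p.toReal) :
    lpNorm p x ^ p.toReal = ∑ j, ‖x j‖ ^ p.toReal := by
  rw [lpNorm_of_ne_top x (ENNReal.toReal_pos_iff.1 hp).2.ne, ← Real.rpow_mul (by positivity),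
    one_div_mul_cancel hp.ne', Real.rpow_one]

lemma lpNorm_le_lpNorm_of_le (hp : p ≠ 0) (hpq : p ≤ q) : lpNorm q x ≤ lpNorm p x := by
  rcases eq_or_ne q ∞ with rfl | hq
  · rw [lpNorm, if_pos rfl]
    exact Real.iSup_le (norm_apply_le_lpNorm x hp) (lpNorm_nonneg x)
  have p_pos := ENNReal.toReal_pos hp (ne_top_of_le_ne_top hq hpq)
  have p_le_q := ENNReal.toReal_mono hq hpq
  have q_pos := p_pos.trans_le p_le_q
  rw [← Real.rpow_le_rpow_iff (lpNorm_nonneg x) (lpNorm_nonneg x) q_pos, lpNorm_rpow_toReal x q_pos]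
  calc ∑ j, ‖x j‖ ^ q.toReal
      = ∑ j, ‖x j‖ ^ (q.toReal - p.toReal) * ‖x j‖ ^ p.toReal := by
        refine Finset.sum_congr rfl fun j _ => ?_
        rw [← Real.rpow_add_of_nonneg (norm_nonneg _) (by linarith) p_pos.le, sub_add_cancel]
    _ ≤ ∑ j, lpNorm p x ^ (q.toReal - p.toReal) * ‖x j‖ ^ p.toReal := by
        gcongr with j
        exact norm_apply_le_lpNorm x hp j
    _ = lpNorm p x ^ q.toReal := by
        rw [← Finset.mul_sum, ← lpNorm_rpow_toReal x p_pos,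
          ← Real.rpow_add_of_nonneg (lpNorm_nonneg x) (by linarith) p_pos.le, sub_add_cancel]

lemma lpNorm_le_card_rpow_mul_lpNorm_top (hq : 0 < q.toReal) :
    lpNorm q x ≤ (n : ℝ) ^ (1 / q.toReal) * lpNorm ∞ x := by
  rw [← Real.rpow_le_rpow_iff (lpNorm_nonneg x) (mul_nonneg (by positivity) (lpNorm_nonneg x)) hq,
    Real.mul_rpow (by positivity) (lpNorm_nonneg x), ← Real.rpow_mul (by positivity),
    one_div_mul_cancel hq.ne', Real.rpow_one, lpNorm_rpow_toReal x hq]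
  calc ∑ j, ‖x j‖ ^ q.toReal ≤ ∑ _j : Fin n, lpNorm ∞ x ^ q.toReal := by
        gcongr with j
        exact norm_apply_le_lpNorm x ENNReal.top_ne_zero j
    _ = n * lpNorm ∞ x ^ q.toReal := by simp

lemma lpNorm_le_card_rpow_mul_lpNorm (hq : q ≠ 0) (hqp : q ≤ p) :
    lpNorm q x ≤ (n : ℝ) ^ (1 / q.toReal - 1 / p.toReal) * lpNorm p x := by
  rcases eq_or_ne q ∞ with rfl | hq'
  · simp [top_le_iff.1 hqp]
  have q_pos := ENNReal.toReal_pos hq hq'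
  rcases eq_or_ne p ∞ with rfl | hp
  · simpa using lpNorm_le_card_rpow_mul_lpNorm_top x q_pos
  have q_le_p := ENNReal.toReal_mono hp hqp
  have p_pos := q_pos.trans_le q_le_p
  have power_mean : (∑ j, ‖x j‖ ^ q.toReal) ^ (p.toReal / q.toReal) ≤
      (n : ℝ) ^ (p.toReal / q.toReal - 1) * ∑ j, ‖x j‖ ^ p.toReal := by
    have := Real.rpow_sum_le_const_mul_sum_rpow Finset.univ (fun j => ‖x j‖ ^ q.toReal)
      ((one_le_div q_pos).2 q_le_p)
    simpa only [abs_of_nonneg, Real.rpow_nonneg, norm_nonneg, Finset.card_univ, Fintype.card_fin,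
      ← Real.rpow_mul, mul_div_cancel₀ _ q_pos.ne'] using this
  rw [← lpNorm_rpow_toReal x q_pos, ← lpNorm_rpow_toReal x p_pos,
    ← Real.rpow_mul (lpNorm_nonneg x), mul_div_cancel₀ _ q_pos.ne'] at power_mean
  rw [← Real.rpow_le_rpow_iff (lpNorm_nonneg x)
      (mul_nonneg (by positivity) (lpNorm_nonneg x)) p_pos,
    Real.mul_rpow (by positivity) (lpNorm_nonneg x), ← Real.rpow_mul (by positivity), sub_mul,
    one_div_mul_cancel p_pos.ne', one_div_mul_eq_div]
  exact power_mean

lemma lpNorm_le_card_rpow_max_mul_lpNorm (hn : 0 < n) (hq : q ≠ 0) (hp : p ≠ 0) :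
    lpNorm q x ≤ (n : ℝ) ^ max (1 / q.toReal - 1 / p.toReal) 0 * lpNorm p x := by
  have one_le_n : (1 : ℝ) ≤ n := by exact_mod_cast hn
  rcases le_total q p with hqp | hpq
  · refine (lpNorm_le_card_rpow_mul_lpNorm x hq hqp).trans ?_
    gcongr
    · exact lpNorm_nonneg x
    · exact le_max_left _ _
  · exact (lpNorm_le_lpNorm_of_le x hp hpq).trans
      (le_mul_of_one_le_left (lpNorm_nonneg x) (Real.one_le_rpow one_le_n (le_max_right _ _)))

end LpNorm

section CoeffForm

variable {𝕂 : Type*} [RCLike 𝕂] {m : ℕ} {n : Fin m → ℕ}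

lemma coeffForm_apply (c : (∀ k, Fin (n k)) → 𝕂) (x : ∀ k, Fin (n k) → 𝕂) :
    coeffForm c x = ∑ j, c j * ∏ k, x k (j k) := by
  simp only [coeffForm, _root_.sum_apply]
  refine Finset.sum_congr rfl fun j _ => ?_
  simp [mul_comm]

lemma norm_coeffForm_le_prod_lpNorm_one {c : (∀ k, Fin (n k)) → 𝕂} (hc : ∀ j, ‖c j‖ ≤ 1)
    (x : ∀ k, Fin (n k) → 𝕂) : ‖coeffForm c x‖ ≤ ∏ k, lpNorm 1 (x k) := by
  simp only [coeffForm_apply, lpNorm_one, Fintype.prod_sum fun k i => ‖x k i‖]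
  refine norm_sum_le_of_le _ fun j _ => ?_
  rw [norm_mul, norm_prod]
  exact mul_le_of_le_one_left (by positivity) (hc j)

end CoeffForm

section RieszThorin

/-- The analytic family of Riesz–Thorin interpolation between `ℓ_{p₀}` and `ℓ_{p₁}`, applied
coordinatewise: it changes the modulus of `w` to `‖w‖ ^ (p * ((1 - z) / p₀ + z / p₁))` and keeps
its phase. The factor `w` makes it vanish at `w = 0` for every `z`. -/
def interpolationFamily (p₀ p₁ p : ℝ) (w z : ℂ) : ℂ :=
  w * (‖w‖ : ℂ) ^ (p * ((1 - z) / p₀ + z / p₁) - 1)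

variable {p₀ p₁ p θ : ℝ}

lemma norm_interpolationFamily (hp₀ : 0 < p₀) (hp₁ : 0 < p₁) (hp : 0 < p) (w : ℂ) {z : ℂ}
    (hz : z.re ∈ Set.Icc 0 1) :
    ‖interpolationFamily p₀ p₁ p w z‖ = ‖w‖ ^ (p * ((1 - z.re) / p₀ + z.re / p₁)) := by
  rcases eq_or_ne w 0 with rfl | hw
  · have exponent_pos : 0 < p * ((1 - z.re) / p₀ + z.re / p₁) := by
      refine mul_pos hp ?_
      rcases hz.1.eq_or_lt with h | h
      · simpa [← h] using hp₀
      · exact add_pos_of_nonneg_of_pos (div_nonneg (by linarith [hz.2]) hp₀.le) (div_pos h hp₁)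
    simp [interpolationFamily, Real.zero_rpow exponent_pos.ne']
  · have exponent_re : (p * ((1 - z) / p₀ + z / p₁) - 1 : ℂ).re =
        p * ((1 - z.re) / p₀ + z.re / p₁) - 1 := by
      simp
    rw [interpolationFamily, norm_mul, Complex.norm_cpow_eq_rpow_re_of_pos (norm_pos_iff.2 hw),
      exponent_re, Real.rpow_sub_one (norm_ne_zero_iff.2 hw),
      mul_div_cancel₀ _ (norm_ne_zero_iff.2 hw)]

lemma differentiable_interpolationFamily (w : ℂ) :
    Differentiable ℂ (interpolationFamily p₀ p₁ p w) := by
  rcases eq_or_ne w 0 with rfl | hw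
  · have family_zero : interpolationFamily p₀ p₁ p 0 = fun _ => 0 := by
      funext z
      rw [interpolationFamily, zero_mul]
    exact family_zero ▸ differentiable_const 0
  · refine Differentiable.const_mul (Differentiable.const_cpow (by fun_prop) (.inl ?_)) _
    simpa using hw

lemma interpolationFamily_self (hp : 0 < p) (hθ : 1 / p = (1 - θ) / p₀ + θ / p₁) (w : ℂ) :
    interpolationFamily p₀ p₁ p w θ = w := by
  have exponent_eq_zero : (p : ℂ) * ((1 - θ) / p₀ + θ / p₁) - 1 = 0 := by
    have : p * ((1 - θ) / p₀ + θ / p₁) - 1 = 0 := by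
      rw [← hθ, mul_one_div_cancel hp.ne', sub_self]
    exact_mod_cast this
  rw [interpolationFamily, exponent_eq_zero, Complex.cpow_zero, mul_one]

lemma norm_interpolationFamily_le (hp₀ : 0 < p₀) (hp₁ : 0 < p₁) (hp : 0 < p) (w : ℂ) {z : ℂ}
    (hz : z.re ∈ Set.Icc 0 1) :
    ‖interpolationFamily p₀ p₁ p w z‖ ≤ max 1 ‖w‖ ^ (p * (1 / p₀ + 1 / p₁)) := by
  obtain ⟨re_nonneg, re_le_one⟩ := hz
  have : 0 ≤ 1 - z.re := by linarith
  rw [norm_interpolationFamily hp₀ hp₁ hp w ⟨re_nonneg, re_le_one⟩]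
  calc ‖w‖ ^ (p * ((1 - z.re) / p₀ + z.re / p₁))
      ≤ max 1 ‖w‖ ^ (p * ((1 - z.re) / p₀ + z.re / p₁)) := by gcongr; exact le_max_right _ _
    _ ≤ max 1 ‖w‖ ^ (p * (1 / p₀ + 1 / p₁)) := by
        gcongr
        · exact le_max_left _ _
        · linarith

lemma lpNorm_interpolationFamily (hp₀ : 0 < p₀) (hp₁ : 0 < p₁) {r q : ℝ≥0∞} (hr : 0 < r.toReal)
    (hq : 0 < q.toReal) {z : ℂ} (hz : z.re ∈ Set.Icc 0 1)
    (hqz : 1 / q.toReal = (1 - z.re) / p₀ + z.re / p₁) {n : ℕ} (x : Fin n → ℂ) :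
    lpNorm q (fun j => interpolationFamily p₀ p₁ r.toReal (x j) z) =
      lpNorm r x ^ (r.toReal / q.toReal) := by
  have norm_rpow (j : Fin n) : ‖interpolationFamily p₀ p₁ r.toReal (x j) z‖ ^ q.toReal =
      ‖x j‖ ^ r.toReal := by
    rw [norm_interpolationFamily hp₀ hp₁ hr _ hz, ← hqz, ← Real.rpow_mul (norm_nonneg _),
      mul_assoc, one_div_mul_cancel hq.ne', mul_one]
  rw [lpNorm_of_ne_top _ (ENNReal.toReal_pos_iff.1 hq).2.ne]
  simp only [norm_rpow]
  rw [← lpNorm_rpow_toReal x hr, ← Real.rpow_mul (lpNorm_nonneg x), mul_one_div]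

lemma mul_prod_rpow_interpolation {ι : Type*} [Fintype ι] {a p₀ p₁ p : ι → ℝ} {M₀ M₁ : ℝ}
    (hM₀ : 0 ≤ M₀) (hM₁ : 0 ≤ M₁) (ha : ∀ k, 0 ≤ a k) (hp : ∀ k, p k ≠ 0)
    (hpθ : ∀ k, 1 / p k = (1 - θ) / p₀ k + θ / p₁ k) :
    (M₀ * ∏ k, a k ^ (p k / p₀ k)) ^ (1 - θ) * (M₁ * ∏ k, a k ^ (p k / p₁ k)) ^ θ =
      M₀ ^ (1 - θ) * M₁ ^ θ * ∏ k, a k := by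
  have rpow_nonneg (k : ι) (s : ℝ) : 0 ≤ a k ^ s := Real.rpow_nonneg (ha k) s
  have exponents_add (k : ι) : p k / p₀ k * (1 - θ) + p k / p₁ k * θ = 1 := by
    rw [div_mul_comm, div_mul_comm _ _ θ, ← add_mul, ← hpθ k, one_div_mul_cancel (hp k)]
  have factor_eq (k : ι) : (a k ^ (p k / p₀ k)) ^ (1 - θ) * (a k ^ (p k / p₁ k)) ^ θ = a k := by
    rw [← Real.rpow_mul (ha k), ← Real.rpow_mul (ha k),
      ← Real.rpow_add' (ha k) (by rw [exponents_add k]; exact one_ne_zero), exponents_add k,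
      Real.rpow_one]
  rw [Real.mul_rpow hM₀ (Finset.prod_nonneg fun k _ => rpow_nonneg k _),
    Real.mul_rpow hM₁ (Finset.prod_nonneg fun k _ => rpow_nonneg k _),
    ← Real.finsetProd_rpow _ _ fun k _ => rpow_nonneg k _,
    ← Real.finsetProd_rpow _ _ fun k _ => rpow_nonneg k _, mul_mul_mul_comm,
    ← Finset.prod_mul_distrib]
  simp only [factor_eq]

variable {m : ℕ} {n : Fin m → ℕ} {p₀ p₁ p : Fin m → ℝ≥0∞}

open Complex.HadamardThreeLines in
lemma bddAbove_norm_coeffForm_interpolationFamily (hp₀ : ∀ k, 0 < (p₀ k).toReal)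
    (hp₁ : ∀ k, 0 < (p₁ k).toReal) (hp : ∀ k, 0 < (p k).toReal) (c : (∀ k, Fin (n k)) → ℂ)
    (x : ∀ k, Fin (n k) → ℂ) :
    BddAbove ((norm ∘ fun z => coeffForm c fun k j =>
      interpolationFamily (p₀ k).toReal (p₁ k).toReal (p k).toReal (x k j) z) ''
        verticalClosedStrip 0 1) := by
  refine ⟨∑ j, ‖c j‖ * ∏ k, max 1 ‖x k (j k)‖ ^
    ((p k).toReal * (1 / (p₀ k).toReal + 1 / (p₁ k).toReal)), ?_⟩
  rintro _ ⟨z, hz, rfl⟩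
  simp only [Function.comp_apply, coeffForm_apply]
  refine norm_sum_le_of_le _ fun j _ => ?_
  rw [norm_mul, norm_prod]
  gcongr with k
  exact norm_interpolationFamily_le (hp₀ k) (hp₁ k) (hp k) _ hz

theorem norm_coeffForm_le_of_interpolation (hp₀ : ∀ k, 0 < (p₀ k).toReal)
    (hp₁ : ∀ k, 0 < (p₁ k).toReal) (hp : ∀ k, 0 < (p k).toReal) (hθ : θ ∈ Set.Icc 0 1)
    (hpθ : ∀ k, 1 / (p k).toReal = (1 - θ) / (p₀ k).toReal + θ / (p₁ k).toReal)
    {c : (∀ k, Fin (n k)) → ℂ} {M₀ M₁ : ℝ} (hM₀ : 0 ≤ M₀) (hM₁ : 0 ≤ M₁)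
    (h₀ : ∀ x, ‖coeffForm c x‖ ≤ M₀ * ∏ k, lpNorm (p₀ k) (x k))
    (h₁ : ∀ x, ‖coeffForm c x‖ ≤ M₁ * ∏ k, lpNorm (p₁ k) (x k)) (x : ∀ k, Fin (n k) → ℂ) :
    ‖coeffForm c x‖ ≤ M₀ ^ (1 - θ) * M₁ ^ θ * ∏ k, lpNorm (p k) (x k) := by
  set y : ℂ → ∀ k, Fin (n k) → ℂ := fun z k j =>
    interpolationFamily (p₀ k).toReal (p₁ k).toReal (p k).toReal (x k j) z
  have differentiable_form : Differentiable ℂ fun z => coeffForm c (y z) := by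
    simp only [coeffForm_apply]
    exact Differentiable.fun_sum fun j _ => .const_mul
      (.fun_finsetProd fun k _ => differentiable_interpolationFamily _) _
  have left_edge (z : ℂ) (hz : z.re = 0) : ‖coeffForm c (y z)‖ ≤
      M₀ * ∏ k, lpNorm (p k) (x k) ^ ((p k).toReal / (p₀ k).toReal) := by
    refine (h₀ _).trans_eq (congrArg _ (Finset.prod_congr rfl fun k _ => ?_))
    exact lpNorm_interpolationFamily (hp₀ k) (hp₁ k) (hp k) (hp₀ k) (by simp [hz]) (by simp [hz]) _
  have right_edge (z : ℂ) (hz : z.re = 1) : ‖coeffForm c (y z)‖ ≤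
      M₁ * ∏ k, lpNorm (p k) (x k) ^ ((p k).toReal / (p₁ k).toReal) := by
    refine (h₁ _).trans_eq (congrArg _ (Finset.prod_congr rfl fun k _ => ?_))
    exact lpNorm_interpolationFamily (hp₀ k) (hp₁ k) (hp k) (hp₁ k) (by simp [hz]) (by simp [hz]) _
  have y_θ : y θ = x := by
    funext k j
    exact interpolationFamily_self (hp k) (hpθ k) _
  have three_lines :=
    Complex.HadamardThreeLines.norm_le_interp_of_mem_verticalClosedStrip₀₁' _ (z := θ)
      (by simpa [Complex.HadamardThreeLines.verticalClosedStrip] using hθ)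
      differentiable_form.diffContOnCl
      (bddAbove_norm_coeffForm_interpolationFamily hp₀ hp₁ hp c x) left_edge right_edge
  rw [y_θ, Complex.ofReal_re] at three_lines
  exact three_lines.trans_eq
    (mul_prod_rpow_interpolation hM₀ hM₁ (fun k => lpNorm_nonneg (x k)) (fun k => (hp k).ne') hpθ)

end RieszThorin

section SignForm

/-- The multilinear form with coefficients `±1`. The signs are units of `ℤ`, so that the same
choice of signs defines a form over every `𝕂`. -/
def signForm (𝕂 : Type*) [RCLike 𝕂] {m : ℕ} {n : Fin m → ℕ} (ε : (∀ k, Fin (n k)) → ℤˣ) :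
    MultilinearMap 𝕂 (fun k => Fin (n k) → 𝕂) 𝕂 :=
  coeffForm fun j => ((ε j : ℤ) : 𝕂)

lemma sum_norm_prod_sq_eq {ι : Type*} [Fintype ι] [DecidableEq ι] {κ : ι → Type*}
    [∀ i, Fintype (κ i)] {𝕂 : Type*} [RCLike 𝕂] (y : ∀ i, EuclideanSpace 𝕂 (κ i)) :
    ∑ j : ∀ i, κ i, ‖∏ i, y i (j i)‖ ^ 2 = ∏ i, ‖y i‖ ^ 2 := by
  simp only [EuclideanSpace.norm_sq_eq, norm_prod, ← Finset.prod_pow,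
    Fintype.prod_sum fun i k => ‖y i k‖ ^ 2]

variable {m : ℕ} {n : Fin m → ℕ}

lemma log_four_mul_le_of_le_pow {N t : ℕ} (hN : 0 < N) (ht : t ≤ 25 ^ N) :
    Real.log (4 * t) ≤ Real.log 100 * N := by
  rcases t.eq_zero_or_pos with rfl | t_pos
  · simp only [Nat.cast_zero, mul_zero, Real.log_zero]
    positivity
  have four_mul_le : 4 * t ≤ 100 ^ N :=
    calc 4 * t ≤ 4 ^ N * 25 ^ N := Nat.mul_le_mul (Nat.le_self_pow hN.ne' 4) ht
      _ = 100 ^ N := by rw [← Nat.mul_pow]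
  rw [mul_comm (Real.log _), ← Real.log_pow]
  exact Real.log_le_log (by positivity) (by exact_mod_cast four_mul_le)

variable (n) in
lemma exists_finset_isCover_half_euclidean : ∃ N : ∀ k, Finset (EuclideanSpace ℂ (Fin (n k))),
    (∀ k, ∀ y ∈ N k, ‖y‖ ≤ 1) ∧
    (∀ k, Metric.IsCover (1 / 2) (Metric.closedBall 0 1)
      (N k : Set (EuclideanSpace ℂ (Fin (n k))))) ∧
    (Fintype.piFinset N).card ≤ 25 ^ ∑ k, n k := by
  choose N N_subset N_cover N_card using fun k =>
    exists_finset_isCover_half_closedBall (EuclideanSpace ℂ (Fin (n k)))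
  refine ⟨N, fun k y hy => by simpa using N_subset k hy, N_cover, ?_⟩
  have finrank_eq (k : Fin m) : finrank ℝ (EuclideanSpace ℂ (Fin (n k))) = 2 * n k := by
    rw [← finrank_mul_finrank ℝ ℂ, Complex.finrank_real_complex, finrank_euclideanSpace_fin]
  rw [Fintype.card_piFinset, ← Finset.prod_pow_eq_pow_sum]
  refine Finset.prod_le_prod' fun k _ => (N_card k).trans_eq ?_
  rw [finrank_eq, pow_mul]
  rfl

theorem exists_signs_norm_signForm_le (hn : 0 < ∑ k, n k) :
    ∃ ε : (∀ k, Fin (n k)) → ℤˣ, ∀ x : ∀ k, Fin (n k) → ℂ,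
      ‖signForm ℂ ε x‖ ≤
        2 ^ (m + 1) * √(Real.log 100 * (∑ k, n k : ℕ)) * ∏ k, lpNorm 2 (x k) := by
  obtain ⟨N, norm_le, cover, card_le⟩ := exists_finset_isCover_half_euclidean n
  obtain ⟨ε, hε⟩ := exists_signs_norm_sum_le (Fintype.piFinset N)
    (fun y (j : ∀ k, Fin (n k)) => ∏ k, y k (j k)) (by
    intro y hy
    rw [sum_norm_prod_sq_eq]
    refine Finset.prod_le_one (fun k _ => by positivity) fun k _ => ?_
    exact pow_le_one₀ (norm_nonneg _) (norm_le k _ (Fintype.mem_piFinset.1 hy k)))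
  set A : MultilinearMap ℂ (fun k => EuclideanSpace ℂ (Fin (n k))) ℂ :=
    (signForm ℂ ε).compLinearMap fun k => (WithLp.linearEquiv 2 ℂ (Fin (n k) → ℂ)).toLinearMap
  have A_apply (y) : A y = ∑ j, ((ε j : ℤ) : ℂ) * ∏ k, y k (j k) := coeffForm_apply _ _
  have A_le (y) (hy : ∀ k, y k ∈ (N k : Set _)) :
      ‖A y‖ ≤ 2 * √(Real.log 100 * (∑ k, n k : ℕ)) := by
    rw [A_apply]
    refine (hε y (Fintype.mem_piFinset.2 hy)).trans ?_
    gcongr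
    exact log_four_mul_le_of_le_pow hn card_le
  refine ⟨ε, fun x => ?_⟩
  have := norm_multilinear_le_of_isCover_half A cover (by positivity) A_le
    fun k => WithLp.toLp 2 (x k)
  simp only [lpNorm_eq_norm_toLp _ two_ne_zero]
  refine this.trans_eq ?_
  rw [Fintype.card_fin, pow_succ, mul_assoc (2 ^ m) 2]

end SignForm

section ScalarField

variable {𝕂 : Type*} [RCLike 𝕂]

variable (𝕂) in
lemma exists_ringHom_complex_norm_eq : ∃ f : 𝕂 →+* ℂ, ∀ a, ‖f a‖ = ‖a‖ := by
  rcases RCLike.I_eq_zero_or_im_I_eq_one (K := 𝕂) with h | h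
  · refine ⟨Complex.ofRealHom.comp (RCLike.realRingEquiv h).toRingHom, fun a => ?_⟩
    exact (Complex.norm_real _).trans ((RCLike.realLinearIsometryEquiv h).norm_map a)
  · exact ⟨(RCLike.complexRingEquiv h).toRingHom, (RCLike.complexLinearIsometryEquiv h).norm_map⟩

lemma lpNorm_congr {𝕃 : Type*} [RCLike 𝕃] {n : ℕ} {x : Fin n → 𝕂} {y : Fin n → 𝕃}
    (hxy : ∀ j, ‖x j‖ = ‖y j‖) (p : ℝ≥0∞) : lpNorm p x = lpNorm p y := by
  simp only [lpNorm, hxy]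

lemma map_signForm {𝕃 : Type*} [RCLike 𝕃] (f : 𝕂 →+* 𝕃) {m : ℕ} {n : Fin m → ℕ}
    (ε : (∀ k, Fin (n k)) → ℤˣ) (x : ∀ k, Fin (n k) → 𝕂) :
    f (signForm 𝕂 ε x) = signForm 𝕃 ε fun k j => f (x k j) := by
  simp only [signForm, coeffForm_apply, map_sum, map_mul, map_prod, map_intCast]

end ScalarField

section Exponents

lemma min_half_le_one_div_iInf {ι : Type*} {p : ι → ℝ≥0∞} {k : ι} (hp : 1 ≤ p k) :
    min (1 / 2) (1 - 1 / (p k).toReal) ≤ (1 / ⨅ k, max 2 (conjExp (p k))).toReal := by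
  have two_le_iInf : (2 : ℝ≥0∞) ≤ ⨅ k, max 2 (conjExp (p k)) := le_iInf fun k => le_max_left _ _
  have one_div_ne_top : 1 / ⨅ k, max 2 (conjExp (p k)) ≠ ∞ := by
    rw [one_div]
    exact ENNReal.inv_ne_top.2 (two_pos.trans_le two_le_iInf).ne'
  have toReal_eq : 1 - 1 / (p k).toReal = (1 - 1 / p k).toReal := by
    rw [ENNReal.toReal_sub_of_le (by simpa using hp) ENNReal.one_ne_top, ENNReal.toReal_div,
      ENNReal.toReal_one]
  calc min (1 / 2) (1 - 1 / (p k).toReal) ≤ (1 / max 2 (conjExp (p k))).toReal := by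
        rcases le_total 2 (conjExp (p k)) with h | h
        · rw [max_eq_right h, conjExp, one_div (_⁻¹), inv_inv, ← toReal_eq]
          exact min_le_right _ _
        · rw [max_eq_left h]
          exact (min_le_left _ _).trans_eq (by simp)
    _ ≤ _ := ENNReal.toReal_mono one_div_ne_top (ENNReal.div_le_div_left (iInf_le _ k) 1)

end Exponents

section Extrapolation

variable {m : ℕ} {p : Fin m → ℝ≥0∞} {M : ℝ}

lemma norm_coeffForm_le_of_le_two {n : Fin m → ℕ} {c : (∀ k, Fin (n k)) → ℂ}
    (hc : ∀ j, ‖c j‖ ≤ 1) (hM : 0 ≤ M)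
    (h₂ : ∀ x, ‖coeffForm c x‖ ≤ M * ∏ k, lpNorm 2 (x k)) {q : ℝ≥0∞} (hq : 1 ≤ q) (hq₂ : q ≤ 2)
    (hp : ∀ k, 1 ≤ p k) (hpq : ∀ k, p k ≤ q) (x : ∀ k, Fin (n k) → ℂ) :
    ‖coeffForm c x‖ ≤ M ^ (2 * (1 - 1 / q.toReal)) * ∏ k, lpNorm (p k) (x k) := by
  have q_ne_top : q ≠ ∞ := ne_top_of_le_ne_top ENNReal.ofNat_ne_top hq₂
  have one_le_q : 1 ≤ q.toReal := by simpa using ENNReal.toReal_mono q_ne_top hq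
  have q_le_two : q.toReal ≤ 2 := by simpa using ENNReal.toReal_mono ENNReal.ofNat_ne_top hq₂
  have q_pos : 0 < q.toReal := by linarith
  have inv_q_le_one : 1 / q.toReal ≤ 1 := (div_le_one q_pos).2 one_le_q
  have half_le_inv_q : 1 / 2 ≤ 1 / q.toReal := one_div_le_one_div_of_le q_pos q_le_two
  calc ‖coeffForm c x‖
      ≤ 1 ^ (1 - 2 * (1 - 1 / q.toReal)) * M ^ (2 * (1 - 1 / q.toReal)) * ∏ k, lpNorm q (x k) :=
        norm_coeffForm_le_of_interpolation (p₀ := fun _ => 1) (p₁ := fun _ => 2) (p := fun _ => q)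
          (by simp) (by simp) (fun _ => q_pos) ⟨by linarith, by linarith⟩
          (fun _ => by rw [ENNReal.toReal_one, ENNReal.toReal_ofNat]; ring) zero_le_one hM
          (fun x => by simpa using norm_coeffForm_le_prod_lpNorm_one hc x) h₂ x
    _ ≤ M ^ (2 * (1 - 1 / q.toReal)) * ∏ k, lpNorm (p k) (x k) := by
        rw [Real.one_rpow, one_mul]
        gcongr with k
        · exact fun k _ => lpNorm_nonneg _
        · exact lpNorm_le_lpNorm_of_le _ (one_pos.trans_le (hp k)).ne' (hpq k)

variable {n : ℕ} {c : (Fin m → Fin n) → ℂ}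

lemma norm_coeffForm_le_rpow_sum_max (hn : 0 < n) (hM : 0 ≤ M)
    (h₂ : ∀ x, ‖coeffForm c x‖ ≤ M * ∏ k, lpNorm 2 (x k)) (hp : ∀ k, p k ≠ 0)
    (x : Fin m → Fin n → ℂ) :
    ‖coeffForm c x‖ ≤
      M * (n : ℝ) ^ (∑ k, max (1 / 2 - 1 / (p k).toReal) 0) * ∏ k, lpNorm (p k) (x k) := by
  have n_pos : (0 : ℝ) < n := by exact_mod_cast hn
  rw [Real.rpow_sum_of_pos n_pos, mul_assoc, ← Finset.prod_mul_distrib]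
  refine (h₂ x).trans ?_
  gcongr with k
  · exact fun k _ => lpNorm_nonneg _
  · simpa using lpNorm_le_card_rpow_max_mul_lpNorm (x k) hn two_ne_zero (hp k)

theorem norm_coeffForm_le_rpow_mul_prod_lpNorm (hm : 0 < m) (hn : 0 < n) (hc : ∀ j, ‖c j‖ ≤ 1)
    {C : ℝ} (hC : 1 ≤ C) (h₂ : ∀ x, ‖coeffForm c x‖ ≤ C * √n * ∏ k, lpNorm 2 (x k))
    (hp : ∀ k, 1 ≤ p k) (x : Fin m → Fin n → ℂ) :
    ‖coeffForm c x‖ ≤ C * (n : ℝ) ^ ((1 / ⨅ k, max 2 (conjExp (p k))).toReal +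
      ∑ k, max (1 / 2 - 1 / (p k).toReal) 0) * ∏ k, lpNorm (p k) (x k) := by
  have : Nonempty (Fin m) := ⟨⟨0, hm⟩⟩
  have one_le_n : (1 : ℝ) ≤ n := by exact_mod_cast hn
  have prod_nonneg : 0 ≤ ∏ k, lpNorm (p k) (x k) := Finset.prod_nonneg fun k _ => lpNorm_nonneg _
  have sum_nonneg : 0 ≤ ∑ k, max (1 / 2 - 1 / (p k).toReal) 0 :=
    Finset.sum_nonneg fun k _ => le_max_right _ _
  obtain ⟨l, hl⟩ := Finite.exists_max p
  have min_half_le := min_half_le_one_div_iInf (hp l)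
  rcases le_total 2 (p l) with two_le | le_two
  · have inv_le_half : 1 / (p l).toReal ≤ 1 / 2 := by
      simpa using ENNReal.toReal_mono (by simp) (ENNReal.inv_le_inv.2 two_le)
    rw [min_eq_left (by linarith)] at min_half_le
    refine (norm_coeffForm_le_rpow_sum_max hn (by positivity) h₂
      (fun k => (one_pos.trans_le (hp k)).ne') x).trans ?_
    rw [Real.sqrt_eq_rpow, mul_assoc C, ← Real.rpow_add (by positivity)]
    gcongr
  · have half_le_inv : 1 / 2 ≤ 1 / (p l).toReal := by
      simpa using ENNReal.toReal_mono (by simpa using (one_pos.trans_le (hp l)).ne')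
        (ENNReal.inv_le_inv.2 le_two)
    have inv_le_one : 1 / (p l).toReal ≤ 1 := by
      simpa using ENNReal.toReal_mono (by simp) (ENNReal.inv_le_inv.2 (hp l))
    rw [min_eq_right (by linarith)] at min_half_le
    refine (norm_coeffForm_le_of_le_two hc (by positivity) h₂ (hp l) le_two hp hl x).trans ?_
    rw [Real.mul_rpow (by positivity) (by positivity), Real.sqrt_eq_rpow,
      ← Real.rpow_mul (by positivity), ← mul_assoc (1 / 2 : ℝ), one_div_mul_cancel two_ne_zero,
      one_mul]
    gcongr
    · exact Real.rpow_le_self_of_one_le hC (by linarith)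
    · linarith

end Extrapolation

lemma exists_signs_norm_signForm_le_mul_sqrt {m : ℕ} (hm : 0 < m) :
    ∃ C : ℝ, 1 ≤ C ∧ ∀ n : ℕ, 0 < n → ∃ ε : (Fin m → Fin n) → ℤˣ, ∀ x : Fin m → Fin n → ℂ,
      ‖signForm ℂ (n := fun _ => n) ε x‖ ≤ C * √n * ∏ k, lpNorm 2 (x k) := by
  refine ⟨2 ^ (m + 1) * √(Real.log 100 * m), ?_, fun n hn => ?_⟩
  · have one_le_log : 1 ≤ Real.log 100 :=
      (Real.le_log_iff_exp_le (by norm_num)).2 (by linarith [Real.exp_one_lt_d9])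
    have one_le_m : (1 : ℝ) ≤ m := by exact_mod_cast hm
    exact one_le_mul_of_one_le_of_one_le (one_le_pow₀ one_le_two)
      (Real.one_le_sqrt.2 (one_le_mul_of_one_le_of_one_le one_le_log one_le_m))
  · obtain ⟨ε, hε⟩ := exists_signs_norm_signForm_le (n := fun _ : Fin m => n) (by simp [hm, hn])
    refine ⟨ε, fun x => (hε x).trans_eq ?_⟩
    rw [Finset.sum_const, Finset.card_univ, Fintype.card_fin, smul_eq_mul, Nat.cast_mul,
      ← mul_assoc (Real.log 100), Real.sqrt_mul (by positivity), ← mul_assoc (2 ^ (m + 1))]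

theorem ksz_optimal_upper_bound_general {𝕂 : Type*} [RCLike 𝕂] (m : ℕ) (hm : 0 < m) :
    ∃ C : ℝ, 0 < C ∧
      ∀ n : ℕ, 0 < n → ∃ ε : (Fin m → Fin n) → ℤˣ, ∀ p : Fin m → ℝ≥0∞, (∀ k, 1 ≤ p k) →
        opNorm p (signForm 𝕂 (n := fun _ => n) ε) ≤
          C * (n : ℝ) ^
            ((1 / ⨅ k, max 2 (conjExp (p k))).toReal
              + ∑ k, max ((1 : ℝ) / 2 - (1 / p k).toReal) 0) := by
  obtain ⟨f, norm_f⟩ := exists_ringHom_complex_norm_eq 𝕂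
  obtain ⟨C, one_le_C, hC⟩ := exists_signs_norm_signForm_le_mul_sqrt hm
  refine ⟨C, by linarith, fun n hn => ?_⟩
  obtain ⟨ε, hε⟩ := hC n hn
  refine ⟨ε, fun p hp => Real.sSup_le ?_ (by positivity)⟩
  rintro _ ⟨x, hx, rfl⟩
  have norm_sign_le (j) : ‖((ε j : ℤ) : ℂ)‖ ≤ 1 := by
    rcases Int.units_eq_one_or (ε j) with h | h <;> simp [h]
  have norm_eq : ‖signForm 𝕂 (n := fun _ => n) ε x‖ = ‖signForm ℂ ε fun k j => f (x k j)‖ := by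
    rw [← map_signForm, norm_f]
  have prod_le_one : ∏ k, lpNorm (p k) (fun j => f (x k j)) ≤ 1 :=
    Finset.prod_le_one (fun k _ => lpNorm_nonneg _) fun k _ =>
      (lpNorm_congr (fun j => norm_f (x k j)) _).trans_le (hx k)
  rw [norm_eq]
  refine (norm_coeffForm_le_rpow_mul_prod_lpNorm hm hn norm_sign_le one_le_C hε hp _).trans ?_
  simp only [ENNReal.toReal_div 1 (p _), ENNReal.toReal_one]
  exact mul_le_of_le_one_right (by positivity) prod_le_one

/-- **Kahane–Salem–Zygmund inequality, optimal exponent (Theorem 1).**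
For positive integers `m, n` and `p_1, …, p_m ∈ [1,∞]` there are a constant `C > 0`
depending only on `m` and signs `ε_j ∈ {−1,1}` such that the `m`-linear form
`A z = ∑_j ε_j z^{(1)}_{j 1} ⋯ z^{(m)}_{j m}` satisfies
`‖A‖ ≤ C · n ^ (1/ρ + ∑ k max (1/2 − 1/p_k) 0)`, with `ρ = min_k max 2 (p_k)*`. -/
theorem ksz_optimal_upper_bound {𝕂 : Type*} [RCLike 𝕂] (m : ℕ) (hm : 0 < m) :
    ∃ C : ℝ, 0 < C ∧
      ∀ n : ℕ, 0 < n → ∀ p : Fin m → ℝ≥0∞, (∀ k, 1 ≤ p k) →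
        ∃ ε : (Fin m → Fin n) → 𝕂, (∀ j, ε j = 1 ∨ ε j = -1) ∧
          opNorm p (coeffForm (𝕂 := 𝕂) (n := fun _ => n) ε) ≤
            C * (n : ℝ) ^
              ((1 / ⨅ k, max 2 (conjExp (p k))).toReal
                + ∑ k, max ((1 : ℝ) / 2 - (1 / p k).toReal) 0) := by
  obtain ⟨C, C_pos, hC⟩ := ksz_optimal_upper_bound_general (𝕂 := 𝕂) m hm
  refine ⟨C, C_pos, fun n hn p hp => ?_⟩
  obtain ⟨ε, hε⟩ := hC n hn
  refine ⟨fun j => ((ε j : ℤ) : 𝕂), fun j => ?_, hε p hp⟩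
  rcases Int.units_eq_one_or (ε j) with h | h <;> simp [h]
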